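/- Let H be a Hopf algebra over k of odd dimension. Then the order of the distinguished group-like element g of H, the order of the distinguished group-like element α of H*, and the order of S⁴ are all odd; consequently, the index of H is odd. -/

import Mathlib

open scoped TensorProduct

/-- A group-like element of a coalgebra: a nonzero element `a` with `Δ a = a ⊗ a`. -/
def IsGroupLike (k : Type*) {H : Type*} [CommSemiring k] [AddCommMonoid H] [Module k H]
    [Coalgebra k H] (a : H) : Prop :=
  a ≠ 0 ∧ Coalgebra.comul (R := k) a = a ⊗ₜ[k] a

/-- The convolution product on the dual of a coalgebra. -/
noncomputable def conv {k H : Type*} [CommSemiring k] [AddCommMonoid H] [Module k H]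
    [Coalgebra k H] (f g : Module.Dual k H) : Module.Dual k H :=
  LinearMap.mul' k k ∘ₗ TensorProduct.map f g ∘ₗ Coalgebra.comul

/-- `l ∈ H*` is a right integral of `H*`: `l * β = β(1) • l` for the convolution product. -/
def IsRightIntegralDual (k : Type*) {H : Type*} [CommSemiring k] [Semiring H]
    [HopfAlgebra k H] (l : Module.Dual k H) : Prop :=
  ∀ f : Module.Dual k H, conv l f = f 1 • l

/-- `Λ ∈ H` is a left integral of `H`: `a * Λ = ε(a) • Λ` for all `a`. -/
def IsLeftIntegral (k : Type*) {H : Type*} [CommSemiring k] [Semiring H]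
    [HopfAlgebra k H] (L : H) : Prop :=
  ∀ a : H, a * L = Coalgebra.counit (R := k) a • L

/-- `Λ ∈ H` is a right integral of `H`: `Λ * a = ε(a) • Λ` for all `a`. -/
def IsRightIntegral (k : Type*) {H : Type*} [CommSemiring k] [Semiring H]
    [HopfAlgebra k H] (L : H) : Prop :=
  ∀ a : H, L * a = Coalgebra.counit (R := k) a • L

/-- `g` is the distinguished group-like element of `H`: it is group-like and
`β * λ = β(g) • λ` for some nonzero right integral `λ` of `H*`. -/
def IsDistinguishedGroupLike (k : Type*) {H : Type*} [CommSemiring k] [Semiring H]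
    [HopfAlgebra k H] (g : H) : Prop :=
  IsGroupLike k g ∧ ∃ l : Module.Dual k H, l ≠ 0 ∧ IsRightIntegralDual k l ∧
    ∀ f : Module.Dual k H, conv f l = f g • l

/-- `α` is the distinguished group-like element of `H*`: an algebra map `H → k` with
`Λ * a = α(a) • Λ` for some nonzero left integral `Λ` of `H`. -/
def IsDistinguishedGroupLikeDual (k : Type*) {H : Type*} [CommSemiring k] [Semiring H]
    [HopfAlgebra k H] (α : H →ₐ[k] k) : Prop :=
  ∃ L : H, L ≠ 0 ∧ IsLeftIntegral k L ∧ ∀ a : H, L * a = α a • L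

/-- `IsHopfIndex k g n` : `n` is the index of the Hopf algebra `H` with distinguished
group-like element `g`, i.e. the smallest positive integer `n` with `S ^ (4 n) = id` and
`g ^ n = 1`, where `S` is the antipode. -/
def IsHopfIndex (k : Type*) {H : Type*} [CommSemiring k] [Semiring H] [HopfAlgebra k H]
    (g : H) (n : ℕ) : Prop :=
  0 < n ∧ (HopfAlgebra.antipode (R := k) (A := H) : Module.End k H) ^ (4 * n) = 1 ∧ g ^ n = 1 ∧
    ∀ m : ℕ, 0 < m → (HopfAlgebra.antipode (R := k) (A := H) : Module.End k H) ^ (4 * m) = 1 →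
      g ^ m = 1 → n ≤ m

/-- The simultaneous eigenspace `H^ω_{a,i,j} = {u ∈ H | S² u = (-1)^a ω^i • u, u * g = ω^j • u}`
for `(a,i,j) ∈ ℤ/2 × ℤ/n × ℤ/n`. -/
noncomputable def hopfEigenspace {k H : Type*} [CommRing k] [Ring H] [HopfAlgebra k H]
    (g : H) (ω : k) {n : ℕ} (t : ZMod 2 × ZMod n × ZMod n) : Submodule k H :=
  Module.End.eigenspace ((HopfAlgebra.antipode (R := k) (A := H) : Module.End k H) ^ 2)
      ((-1 : k) ^ t.1.val * ω ^ t.2.1.val) ⊓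
    Module.End.eigenspace (LinearMap.mulRight k g : Module.End k H) (ω ^ t.2.2.val)

/-- Convolution powers of an element of the dual; the zeroth power is the counit,
the unit of the convolution algebra. -/
noncomputable def convPow {k H : Type*} [CommSemiring k] [AddCommMonoid H] [Module k H]
    [Coalgebra k H] (f : Module.Dual k H) : ℕ → Module.Dual k H
  | 0 => Coalgebra.counit
  | m + 1 => conv f (convPow f m)

section Sweedler

open Coalgebra LinearMap WithConv

variable {k H : Type*} [Field k] [Ring H] [HopfAlgebra k H]

local notation "S" => HopfAlgebra.antipode k (A := H)
local notation "ι₁" => AlgHom.toLinearMap (Algebra.TensorProduct.includeLeft : H →ₐ[k] H ⊗[k] H)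
local notation "ι₂" => AlgHom.toLinearMap (Algebra.TensorProduct.includeRight : H →ₐ[k] H ⊗[k] H)

theorem toConv_comp_antipode_mul {A : Type*} [Ring A] [Algebra k A] (f : H →ₐ[k] A) :
    toConv (f.toLinearMap ∘ₗ S) * toConv f.toLinearMap = 1 := by
  ext a
  rw [(ℛ k a).convMul_apply]
  simpa [map_sum] using congrArg f (HopfAlgebra.sum_antipode_mul_eq_algebraMap_counit (ℛ k a))

theorem toConv_mul_comp_antipode {A : Type*} [Ring A] [Algebra k A] (f : H →ₐ[k] A) :
    toConv f.toLinearMap * toConv (f.toLinearMap ∘ₗ S) = 1 := by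
  ext a
  rw [(ℛ k a).convMul_apply]
  simpa [map_sum] using congrArg f (HopfAlgebra.sum_mul_antipode_eq_algebraMap_counit (ℛ k a))

theorem toConv_includeLeft_comp_mul_includeRight (f : H →ₗ[k] H) :
    toConv (ι₁ ∘ₗ f) * toConv ι₂ = toConv (f.rTensor H ∘ₗ comul) := by
  ext a
  rw [(ℛ k a).convMul_apply]
  conv_rhs => change f.rTensor H (comul a); rw [← (ℛ k a).eq]
  simp

theorem toConv_includeLeft_mul_includeRight :
    toConv ι₁ * toConv ι₂ = toConv (comul (R := k) (A := H)) := by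
  simpa using toConv_includeLeft_comp_mul_includeRight (k := k) (H := H) LinearMap.id

/-- `S(a₁) a₂ ⊗ a₃ = 1 ⊗ a`. -/
theorem sum_antipode_tmul_mul_comul {ι : Type*} {a : H} (r : Repr k a ι) :
    ∑ i ∈ r.index, (S (r.left i) ⊗ₜ[k] (1 : H)) * comul (r.right i) = 1 ⊗ₜ a := by
  have h : toConv (ι₁ ∘ₗ S) * toConv (comul (R := k) (A := H)) =
      toConv ι₂ := by
    rw [← toConv_includeLeft_mul_includeRight, ← mul_assoc, toConv_comp_antipode_mul, one_mul]
  simpa [r.convMul_apply] using congrArg (fun φ : WithConv (H →ₗ[k] H ⊗[k] H) ↦ φ a) h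

/-- `a₁ ⊗ a₂ S(a₃) = a ⊗ 1`. -/
theorem sum_comul_mul_tmul_antipode {ι : Type*} {a : H} (r : Repr k a ι) :
    ∑ i ∈ r.index, comul (r.left i) * ((1 : H) ⊗ₜ[k] S (r.right i)) = a ⊗ₜ 1 := by
  have h : toConv (comul (R := k) (A := H)) * toConv (ι₂ ∘ₗ S) =
      toConv ι₁ := by
    rw [← toConv_includeLeft_mul_includeRight, mul_assoc, toConv_mul_comp_antipode, mul_one]
  simpa [r.convMul_apply] using congrArg (fun φ : WithConv (H →ₗ[k] H ⊗[k] H) ↦ φ a) h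

/-- `a₁ S(a₂) ⊗ a₃ = 1 ⊗ a`. -/
theorem sum_tmul_mul_rTensor_antipode_comul {ι : Type*} {a : H} (r : Repr k a ι) :
    ∑ i ∈ r.index, (r.left i ⊗ₜ[k] (1 : H)) * (S).rTensor H (comul (r.right i)) = 1 ⊗ₜ a := by
  have h : toConv ι₁ * toConv ((S).rTensor H ∘ₗ comul) =
      toConv ι₂ := by
    rw [← toConv_includeLeft_comp_mul_includeRight, ← mul_assoc, toConv_mul_comp_antipode,
      one_mul]
  simpa [r.convMul_apply] using congrArg (fun φ : WithConv (H →ₗ[k] H ⊗[k] H) ↦ φ a) h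

end Sweedler

section Order

variable {M : Type*} [Monoid M]

theorem odd_orderOf_of_sq_pow_eq_one {x : M} (hx : IsOfFinOrder x)
    (h : ∀ m : ℕ, (x ^ m) ^ 2 = 1 → x ^ m = 1) : Odd (orderOf x) := by
  by_contra hodd
  obtain ⟨m, hm⟩ := Nat.not_odd_iff_even.mp hodd
  have hpos := hx.orderOf_pos
  have hone : x ^ m = 1 := h m (by rw [← pow_mul, mul_two, ← hm, pow_orderOf_eq_one])
  have := orderOf_le_of_pow_eq_one (by omega) hone
  omega

theorem Nat.sInf_pos_multiples {d : ℕ} (hd : 0 < d) : sInf {m : ℕ | 0 < m ∧ d ∣ m} = d := by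
  apply le_antisymm
  · exact Nat.sInf_le ⟨hd, dvd_rfl⟩
  · have := Nat.sInf_mem (s := {m : ℕ | 0 < m ∧ d ∣ m}) ⟨d, hd, dvd_rfl⟩
    exact Nat.le_of_dvd this.1 this.2

end Order

section Trace

open LinearMap Module

theorem trace_eq_of_semiconjBy {k V : Type*} [Field k] [AddCommGroup V] [Module k V]
    {u f f' : Module.End k V} (hu : IsUnit u) (h : SemiconjBy u f f') :
    trace k V f = trace k V f' := by
  obtain ⟨u, rfl⟩ := hu
  rw [← trace_conj k f u, h.eq, mul_assoc, Units.mul_inv, mul_one]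

variable {k V : Type*} [Field k] [CharZero k] [AddCommGroup V] [Module k V]
  [FiniteDimensional k V]

theorem eq_one_of_sq_eq_one_of_trace_mul_trace (hV : Odd (finrank k V)) {f : Module.End k V}
    (hf : f ^ 2 = 1) (ht : trace k V f * trace k V f = finrank k V * trace k V f) : f = 1 := by
  set e : Module.End k V := (2⁻¹ : k) • (1 - f) with he
  have hidem : IsIdempotentElem e := by
    have h1 : (1 - f) * (1 - f) = (2 : k) • (1 - f) := by
      rw [mul_sub, sub_mul, sub_mul, ← sq f, hf, two_smul]
      simp only [mul_one, one_mul]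
      abel
    rw [IsIdempotentElem, he, smul_mul_smul_comm, h1, smul_smul]
    norm_num
  have hf' : f = 1 - (2 : k) • e := by simp [he, smul_smul]
  have htr : trace k V f = finrank k V - 2 * finrank k (range e) := by
    conv_lhs => rw [hf']
    rw [map_sub, map_smul, hidem.isProj_range.trace, trace_one, smul_eq_mul]
  have hprod : (finrank k V - 2 * finrank k (range e) : k) * (2 * finrank k (range e)) = 0 := by
    rw [htr] at ht
    linear_combination -ht
  rcases mul_eq_zero.mp hprod with h | h
  · have : finrank k V = 2 * finrank k (range e) := by exact_mod_cast sub_eq_zero.mp h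
    exact absurd hV (by simp [this])
  · have h0 : e = 0 := by
      rw [← hidem.trace_eq_zero_iff, hidem.isProj_range.trace]
      simpa using h
    simpa [h0] using hf'

theorem odd_orderOf_of_semiconjBy (hV : Odd (finrank k V)) {f : Module.End k V}
    (hfin : IsOfFinOrder f) {u : Module.End k (V ⊗[k] V)} (hu : IsUnit u)
    (h : SemiconjBy u (TensorProduct.map f f) (TensorProduct.map f 1)) : Odd (orderOf f) := by
  refine odd_orderOf_of_sq_pow_eq_one hfin fun m hm ↦
    eq_one_of_sq_eq_one_of_trace_mul_trace hV hm ?_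
  have := trace_eq_of_semiconjBy hu (h.pow_right m)
  rw [TensorProduct.map_pow, TensorProduct.map_pow, one_pow, trace_tensorProduct',
    trace_tensorProduct', trace_one] at this
  rw [this, mul_comm]

end Trace

section Hit

open Coalgebra LinearMap

variable {k H : Type*} [Field k] [Ring H] [HopfAlgebra k H]

local notation "S" => HopfAlgebra.antipode k (A := H)

/-- The operator `a ↦ f(a₁) a₂`. -/
noncomputable def leftHit (f : Module.Dual k H) : Module.End k H :=
  (TensorProduct.lid k H).toLinearMap ∘ₗ f.rTensor H ∘ₗ comul

/-- The operator `a ↦ f(a₂) a₁`. -/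
noncomputable def rightHit (f : Module.Dual k H) : Module.End k H :=
  (TensorProduct.rid k H).toLinearMap ∘ₗ f.lTensor H ∘ₗ comul

theorem leftHit_apply (f : Module.Dual k H) (a : H) :
    leftHit f a = TensorProduct.lid k H (f.rTensor H (comul a)) := rfl

theorem rightHit_apply (f : Module.Dual k H) (a : H) :
    rightHit f a = TensorProduct.rid k H (f.lTensor H (comul a)) := rfl

theorem leftHit_eq_sum (f : Module.Dual k H) {ι : Type*} {a : H} (r : Repr k a ι) :
    leftHit f a = ∑ i ∈ r.index, f (r.left i) • r.right i := by
  rw [leftHit_apply, ← r.eq]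
  simp

theorem rightHit_eq_sum (f : Module.Dual k H) {ι : Type*} {a : H} (r : Repr k a ι) :
    rightHit f a = ∑ i ∈ r.index, f (r.right i) • r.left i := by
  rw [rightHit_apply, ← r.eq]
  simp

theorem conv_apply_eq_leftHit (f l : Module.Dual k H) (a : H) : conv f l a = l (leftHit f a) := by
  rw [leftHit_eq_sum f (ℛ k a), conv, comp_apply, comp_apply, ← (ℛ k a).eq]
  simp

theorem conv_apply_eq_rightHit (f l : Module.Dual k H) (a : H) :
    conv f l a = f (rightHit l a) := by
  rw [rightHit_eq_sum l (ℛ k a), conv, comp_apply, comp_apply, ← (ℛ k a).eq]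
  simp [mul_comm]

theorem leftHit_counit : leftHit (counit (R := k) (A := H)) = 1 := by
  ext a
  simp [leftHit_apply]

theorem rightHit_counit : rightHit (counit (R := k) (A := H)) = 1 := by
  ext a
  simp [rightHit_apply]

theorem counit_leftHit (f : Module.Dual k H) (a : H) : counit (R := k) (leftHit f a) = f a := by
  rw [← conv_apply_eq_leftHit, conv_apply_eq_rightHit, rightHit_counit, Module.End.one_apply]

theorem counit_rightHit (f : Module.Dual k H) (a : H) : counit (R := k) (rightHit f a) = f a := by
  rw [← conv_apply_eq_rightHit, conv_apply_eq_leftHit, leftHit_counit, Module.End.one_apply]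

theorem comul_leftHit (f : Module.Dual k H) (a : H) :
    comul (R := k) (leftHit f a) = (leftHit f).rTensor H (comul a) := by
  have h1 : (comul ∘ₗ (TensorProduct.lid k H).toLinearMap) ∘ₗ f.rTensor H =
      (TensorProduct.lid k (H ⊗[k] H)).toLinearMap ∘ₗ f.rTensor (H ⊗[k] H) ∘ₗ comul.lTensor H := by
    ext; simp
  have h2 : (leftHit f).rTensor H = (TensorProduct.lid k (H ⊗[k] H)).toLinearMap ∘ₗ
      f.rTensor (H ⊗[k] H) ∘ₗ (TensorProduct.assoc k H H H).toLinearMap ∘ₗ comul.rTensor H := by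
    rw [leftHit, rTensor_comp, rTensor_comp, ← comp_assoc, ← comp_assoc, ← comp_assoc]
    congr 1
    ext; simp [TensorProduct.smul_tmul']
  rw [h2, comp_apply, comp_apply, comp_apply, LinearEquiv.coe_coe (TensorProduct.assoc k H H H),
    coassoc_apply]
  exact LinearMap.congr_fun h1 (comul a)

theorem comul_rightHit (f : Module.Dual k H) (a : H) :
    comul (R := k) (rightHit f a) = (rightHit f).lTensor H (comul a) := by
  have h1 : (comul ∘ₗ (TensorProduct.rid k H).toLinearMap) ∘ₗ f.lTensor H =
      (TensorProduct.rid k (H ⊗[k] H)).toLinearMap ∘ₗ f.lTensor (H ⊗[k] H) ∘ₗ comul.rTensor H := by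
    ext; simp
  have h2 : (rightHit f).lTensor H = (TensorProduct.rid k (H ⊗[k] H)).toLinearMap ∘ₗ
      f.lTensor (H ⊗[k] H) ∘ₗ (TensorProduct.assoc k H H H).symm.toLinearMap ∘ₗ
        comul.lTensor H := by
    rw [rightHit, lTensor_comp, lTensor_comp, ← comp_assoc, ← comp_assoc, ← comp_assoc]
    congr 1
    ext; simp
  rw [h2, comp_apply, comp_apply, comp_apply,
    LinearEquiv.coe_coe (TensorProduct.assoc k H H H).symm, coassoc_symm_apply]
  exact LinearMap.congr_fun h1 (comul a)

theorem commute_leftHit_rightHit (f l : Module.Dual k H) :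
    Commute (leftHit f) (rightHit l) := by
  ext a
  change leftHit f (rightHit l a) = rightHit l (leftHit f a)
  rw [leftHit_apply, comul_rightHit, leftHit_eq_sum f (ℛ k a), ← (ℛ k a).eq]
  simp

theorem leftHit_mul (f : H →ₐ[k] k) (a b : H) :
    leftHit f.toLinearMap (a * b) = leftHit f.toLinearMap a * leftHit f.toLinearMap b := by
  have h (w : H ⊗[k] H) : TensorProduct.lid k H (f.toLinearMap.rTensor H w) =
      Algebra.TensorProduct.lid k H (Algebra.TensorProduct.map f (AlgHom.id k H) w) := rfl
  simp only [leftHit_apply, Bialgebra.comul_mul, h, map_mul]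

theorem rightHit_mul (f : H →ₐ[k] k) (a b : H) :
    rightHit f.toLinearMap (a * b) = rightHit f.toLinearMap a * rightHit f.toLinearMap b := by
  have h (w : H ⊗[k] H) : TensorProduct.rid k H (f.toLinearMap.lTensor H w) =
      Algebra.TensorProduct.rid k k H (Algebra.TensorProduct.map (AlgHom.id k H) f w) := rfl
  simp only [rightHit_apply, Bialgebra.comul_mul, h, map_mul]

theorem rTensor_mul_of_map_mul {f : Module.End k H} (hf : ∀ a b, f (a * b) = f a * f b)
    (v w : H ⊗[k] H) : f.rTensor H (v * w) = f.rTensor H v * f.rTensor H w := by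
  induction v with
  | zero => simp
  | add v v' hv hv' => simp [add_mul, hv, hv']
  | tmul a b =>
    induction w with
    | zero => simp
    | add w w' hw hw' => simp [mul_add, hw, hw']
    | tmul c d => simp [hf]

/-- The convolution inverse `α ∘ S` of an algebra map `α` gives the inverse operator. -/
theorem leftHit_comp_antipode_mul_leftHit (f : H →ₐ[k] k) :
    leftHit (f.toLinearMap ∘ₗ S) * leftHit f.toLinearMap = 1 := by
  ext a
  have h (x : H) (w : H ⊗[k] H) :
      TensorProduct.lid k H (f.toLinearMap.rTensor H ((x ⊗ₜ 1) * (S).rTensor H w)) =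
        f x • TensorProduct.lid k H ((f.toLinearMap ∘ₗ S).rTensor H w) := by
    induction w with
    | zero => simp
    | add w w' hw hw' => simp only [map_add, mul_add, smul_add, hw, hw']
    | tmul c d => simp [mul_smul]
  have hsum := congrArg (fun w ↦ TensorProduct.lid k H (f.toLinearMap.rTensor H w))
    (sum_tmul_mul_rTensor_antipode_comul (ℛ k a))
  simp only [map_sum, h] at hsum
  simpa [leftHit_eq_sum f.toLinearMap (ℛ k a), leftHit_apply (f.toLinearMap ∘ₗ S)] using hsum

theorem convPow_apply (f : Module.Dual k H) (m : ℕ) (a : H) :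
    convPow f m a = counit (R := k) ((leftHit f ^ m) a) := by
  induction m generalizing a with
  | zero => rfl
  | succ m ih => rw [convPow, conv_apply_eq_leftHit, ih, pow_succ, Module.End.mul_apply]

theorem comul_leftHit_pow (f : Module.Dual k H) (m : ℕ) (a : H) :
    comul (R := k) ((leftHit f ^ m) a) = (leftHit f ^ m).rTensor H (comul a) := by
  induction m with
  | zero => simp [Module.End.one_eq_id]
  | succ m ih =>
    rw [pow_succ', Module.End.mul_apply, comul_leftHit, ih, Module.End.mul_eq_comp, rTensor_comp,
      comp_apply]

theorem comul_rightHit_pow (f : Module.Dual k H) (m : ℕ) (a : H) :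
    comul (R := k) ((rightHit f ^ m) a) = (rightHit f ^ m).lTensor H (comul a) := by
  induction m with
  | zero => simp [Module.End.one_eq_id]
  | succ m ih =>
    rw [pow_succ', Module.End.mul_apply, comul_rightHit, ih, Module.End.mul_eq_comp, lTensor_comp,
      comp_apply]

/-- The powers of the operator attached to `f` are the operators attached to its convolution
powers. -/
theorem leftHit_pow (f : Module.Dual k H) (m : ℕ) : leftHit f ^ m = leftHit (convPow f m) := by
  have h : convPow f m = counit ∘ₗ (leftHit f ^ m) := LinearMap.ext (convPow_apply f m)
  ext a
  rw [h, leftHit_apply, rTensor_comp, comp_apply, ← comul_leftHit_pow, rTensor_counit_comul]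
  simp

theorem counit_rightHit_pow (f : Module.Dual k H) (m : ℕ) (a : H) :
    counit (R := k) ((rightHit f ^ m) a) = convPow f m a := by
  induction m generalizing a with
  | zero => rfl
  | succ m ih =>
    rw [pow_succ', Module.End.mul_apply, counit_rightHit, ← counit_leftHit, convPow,
      conv_apply_eq_leftHit, ← ih]
    exact congrArg counit
      (LinearMap.congr_fun ((commute_leftHit_rightHit f f).pow_right m).eq a)

theorem rightHit_pow (f : Module.Dual k H) (m : ℕ) : rightHit f ^ m = rightHit (convPow f m) := by
  have h : convPow f m = counit ∘ₗ (rightHit f ^ m) :=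
    LinearMap.ext fun a ↦ (counit_rightHit_pow f m a).symm
  ext a
  rw [h, rightHit_apply, lTensor_comp, comp_apply, ← comul_rightHit_pow, lTensor_counit_comul]
  simp

theorem leftHit_pow_eq_one_iff (f : Module.Dual k H) (m : ℕ) :
    leftHit f ^ m = 1 ↔ convPow f m = counit := by
  refine ⟨fun h ↦ LinearMap.ext fun a ↦ ?_, fun h ↦ by rw [leftHit_pow, h, leftHit_counit]⟩
  rw [convPow_apply, h, Module.End.one_apply]

/-- The Galois map `a ⊗ b ↦ a b₁ ⊗ b₂`. -/
noncomputable def galoisMap (k H : Type*) [Field k] [Ring H] [HopfAlgebra k H] :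
    Module.End k (H ⊗[k] H) :=
  TensorProduct.lift ((LinearMap.mul k (H ⊗[k] H)).compl₁₂
    (Algebra.TensorProduct.includeLeft : H →ₐ[k] H ⊗[k] H).toLinearMap comul)

theorem galoisMap_tmul (a b : H) : galoisMap k H (a ⊗ₜ b) = (a ⊗ₜ 1) * comul b := by
  simp [galoisMap]

variable [FiniteDimensional k H]

theorem isUnit_leftHit (f : H →ₐ[k] k) : IsUnit (leftHit f.toLinearMap) :=
  .of_mul_eq_one_right _ (leftHit_comp_antipode_mul_leftHit f)

theorem isOfFinOrder_leftHit (f : H →ₐ[k] k) : IsOfFinOrder (leftHit f.toLinearMap) := by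
  obtain ⟨u, hu⟩ := isUnit_leftHit f
  rw [← hu, Units.isOfFinOrder_val, ← not_not (a := IsOfFinOrder u),
    ← injective_pow_iff_not_isOfFinOrder]
  intro hinj
  have hmul (m : ℕ) : ∃ φ : H →ₐ[k] k, φ.toLinearMap = convPow f.toLinearMap m := by
    induction m with
    | zero => exact ⟨Bialgebra.counitAlgHom k H, rfl⟩
    | succ m ih =>
      obtain ⟨φ, hφ⟩ := ih
      have happ (a : H) : convPow f.toLinearMap (m + 1) a = φ (leftHit f.toLinearMap a) := by
        rw [convPow, conv_apply_eq_leftHit, ← hφ, AlgHom.toLinearMap_apply]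
      have hone : leftHit f.toLinearMap 1 = 1 := by
        simp [leftHit_apply, Algebra.TensorProduct.one_def]
      refine ⟨AlgHom.ofLinearMap (convPow f.toLinearMap (m + 1)) ?_ fun a b ↦ ?_, rfl⟩
      · rw [happ, hone, map_one]
      · rw [happ, happ, happ, leftHit_mul, map_mul]
  choose φ hφ using hmul
  refine not_injective_infinite_finite φ fun i j hij ↦ hinj (Units.ext ?_)
  simp only [Units.val_pow_eq_pow_val, hu, leftHit_pow, ← hφ, hij]

theorem isUnit_galoisMap : IsUnit (galoisMap k H) := by
  rw [isUnit_iff_range_eq_top, eq_top_iff, ← TensorProduct.span_tmul_eq_top, Submodule.span_le]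
  rintro _ ⟨a, b, rfl⟩
  refine ⟨∑ i ∈ (ℛ k b).index, (a * S ((ℛ k b).left i)) ⊗ₜ (ℛ k b).right i, ?_⟩
  have h := congrArg ((a ⊗ₜ[k] (1 : H)) * ·) (sum_antipode_tmul_mul_comul (ℛ k b))
  simpa [galoisMap_tmul, Finset.mul_sum, ← mul_assoc] using h

theorem odd_orderOf_leftHit [CharZero k] (hdim : Odd (Module.finrank k H)) (f : H →ₐ[k] k) :
    Odd (orderOf (leftHit f.toLinearMap)) := by
  refine odd_orderOf_of_semiconjBy hdim (isOfFinOrder_leftHit f) (isUnit_galoisMap (k := k)) ?_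
  refine TensorProduct.ext' fun a b ↦ ?_
  rw [Module.End.mul_apply, Module.End.mul_apply, TensorProduct.map_tmul, galoisMap_tmul,
    galoisMap_tmul, comul_leftHit, Module.End.one_eq_id]
  change _ = (leftHit f.toLinearMap).rTensor H _
  rw [rTensor_mul_of_map_mul (leftHit_mul f), rTensor_tmul]

end Hit

section GroupLike

open Coalgebra LinearMap

variable {k H : Type*} [Field k] [Ring H] [HopfAlgebra k H]

theorem IsGroupLike.isGroupLikeElem {a : H} (ha : IsGroupLike k a) : IsGroupLikeElem k a := by
  refine ⟨?_, ha.2⟩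
  have h := congrArg (TensorProduct.lid k H) (rTensor_counit_comul (R := k) a)
  rw [ha.2] at h
  have h' : (counit (R := k) a - 1) • a = 0 := by simpa [sub_smul, sub_eq_zero] using h
  exact sub_eq_zero.mp ((smul_eq_zero.mp h').resolve_right ha.1)

variable [FiniteDimensional k H]

theorem IsGroupLikeElem.isOfFinOrder {a : H} (ha : IsGroupLikeElem k a) : IsOfFinOrder a := by
  have : Finite (GroupLike k H) := (linearIndep_groupLikeVal (R := k) (A := H)).finite
  have h := (isOfFinOrder_of_finite (⟨a, ha⟩ : GroupLike k H))
  simpa [Units.isOfFinOrder_val] using!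
    Units.isOfFinOrder_val.mpr ((GroupLike.toUnits k (A := H)).isOfFinOrder h)

theorem IsGroupLikeElem.odd_orderOf [CharZero k] (hdim : Odd (Module.finrank k H)) {a : H}
    (ha : IsGroupLikeElem k a) : Odd (orderOf a) := by
  refine odd_orderOf_of_sq_pow_eq_one ha.isOfFinOrder fun m hm ↦ ?_
  have hsemi : SemiconjBy (galoisMap k H) (TensorProduct.map 1 (mulRight k a))
      (TensorProduct.map (mulRight k a) (mulRight k a)) := by
    refine TensorProduct.ext' fun x y ↦ ?_
    have h (w : H ⊗[k] H) :
        TensorProduct.map (mulRight k a) (mulRight k a) w = w * (a ⊗ₜ a) := by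
      induction w with
      | zero => simp
      | add w w' hw hw' => simp only [map_add, add_mul, hw, hw']
      | tmul c d => simp
    simp [h, galoisMap_tmul, ha.comul_eq_tmul_self, mul_assoc]
  have htr := trace_eq_of_semiconjBy isUnit_galoisMap (hsemi.pow_right m)
  rw [TensorProduct.map_pow, TensorProduct.map_pow, one_pow, trace_tensorProduct',
    trace_tensorProduct', trace_one] at htr
  have h1 := eq_one_of_sq_eq_one_of_trace_mul_trace hdim (f := mulRight k a ^ m)
    (by rw [pow_mulRight, pow_mulRight, hm, mulRight_one]; rfl) htr.symm
  rw [pow_mulRight] at h1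
  simpa using LinearMap.congr_fun h1 1

end GroupLike

section Radford

open Coalgebra LinearMap

variable {k H : Type*} [Field k] [Ring H] [HopfAlgebra k H]

local notation "S" => HopfAlgebra.antipode k (A := H)

theorem IsRightIntegralDual.leftHit_apply {l : Module.Dual k H} (hl : IsRightIntegralDual k l)
    (a : H) : leftHit l a = l a • 1 := by
  refine Module.eval_apply_injective k (LinearMap.ext fun f ↦ ?_)
  rw [Module.Dual.eval_apply, Module.Dual.eval_apply]
  rw [← conv_apply_eq_leftHit, hl f]
  simp [mul_comm]

theorem rightHit_apply_of_conv_eq {l : Module.Dual k H} {g : H}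
    (hl : ∀ f : Module.Dual k H, conv f l = f g • l) (a : H) : rightHit l a = l a • g := by
  refine Module.eval_apply_injective k (LinearMap.ext fun f ↦ ?_)
  rw [Module.Dual.eval_apply, Module.Dual.eval_apply]
  rw [← conv_apply_eq_rightHit, hl f]
  simp [mul_comm]

/-- Contraction of the second tensor factor is left linear in the first. -/
theorem rid_lTensor_tmul_one_mul (l : Module.Dual k H) (x : H) (w : H ⊗[k] H) :
    TensorProduct.rid k H (l.lTensor H ((x ⊗ₜ 1) * w)) =
      x * TensorProduct.rid k H (l.lTensor H w) := by
  induction w with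
  | zero => simp
  | add w w' hw hw' => simp only [map_add, mul_add, hw, hw']
  | tmul c d => simp

theorem lid_rTensor_one_tmul_mul (l : Module.Dual k H) (x : H) (w : H ⊗[k] H) :
    TensorProduct.lid k H (l.rTensor H ((1 ⊗ₜ x) * w)) =
      x * TensorProduct.lid k H (l.rTensor H w) := by
  induction w with
  | zero => simp
  | add w w' hw hw' => simp only [map_add, mul_add, hw, hw']
  | tmul c d => simp

theorem lid_rTensor_mul_one_tmul (l : Module.Dual k H) (x : H) (w : H ⊗[k] H) :
    TensorProduct.lid k H (l.rTensor H (w * (1 ⊗ₜ x))) =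
      TensorProduct.lid k H (l.rTensor H w) * x := by
  induction w with
  | zero => simp
  | add w w' hw hw' => simp only [map_add, add_mul, hw, hw']
  | tmul c d => simp

/-- A nonzero integral `l` of `H*` is a nondegenerate functional. -/
theorem eq_zero_of_forall_integral_mul_eq_zero {l : Module.Dual k H} {g : H} (hl0 : l ≠ 0)
    (hlg : ∀ f : Module.Dual k H, conv f l = f g • l) {b : H} (hb : ∀ a, l (a * b) = 0) :
    b = 0 := by
  have hslice {b : H} (hb : ∀ a, l (a * b) = 0) (a : H) :
      TensorProduct.rid k H (l.lTensor H ((1 ⊗ₜ a) * comul b)) = 0 := by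
    rw [← sum_antipode_tmul_mul_comul (ℛ k a), Finset.sum_mul]
    simp only [mul_assoc, ← Bialgebra.comul_mul, map_sum, rid_lTensor_tmul_one_mul]
    refine Finset.sum_eq_zero fun i _ ↦ ?_
    rw [← rightHit_apply, rightHit_apply_of_conv_eq hlg, hb, zero_smul, mul_zero]
  let e := Module.Basis.ofVectorSpace k H
  have hcomul {b : H} (hb : ∀ a, l (a * b) = 0) :
      ∃ c : Module.Basis.ofVectorSpaceIndex k H →₀ H,
        (c.sum fun i n ↦ e i ⊗ₜ[k] n) = comul b ∧ ∀ i a, l (a * c i) = 0 := by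
    obtain ⟨c, hc⟩ := TensorProduct.eq_repr_basis_left e (comul (R := k) b)
    refine ⟨c, hc, fun i a ↦ ?_⟩
    have h := hslice hb a
    rw [← hc, Finsupp.sum, Finset.mul_sum] at h
    simp only [Algebra.TensorProduct.tmul_mul_tmul, one_mul, map_sum, lTensor_tmul,
      TensorProduct.rid_tmul] at h
    by_cases hi : i ∈ c.support
    · exact linearIndependent_iff'.mp e.linearIndependent c.support _ h i hi
    · simp [Finsupp.notMem_support_iff.mp hi]
  have hcounit {b : H} (hb : ∀ a, l (a * b) = 0) : counit (R := k) b = 0 := by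
    obtain ⟨c, hc, hc0⟩ := hcomul hb
    obtain ⟨a, ha⟩ : ∃ a, l a ≠ 0 := by
      by_contra! h
      exact hl0 (LinearMap.ext h)
    have h := congrArg (fun x ↦ l (a * x))
      (HopfAlgebra.mul_antipode_rTensor_comul_apply (R := k) b)
    rw [← hc] at h
    simp only [Finsupp.sum, map_sum, rTensor_tmul, mul'_apply, Finset.mul_sum, ← mul_assoc, hc0,
      Finset.sum_const_zero] at h
    rw [← Algebra.commutes, ← Algebra.smul_def, map_smul, smul_eq_mul] at h
    exact (mul_eq_zero.mp h.symm).resolve_right ha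
  obtain ⟨c, hc, hc0⟩ := hcomul hb
  have h := congrArg (TensorProduct.rid k H) (lTensor_counit_comul (R := k) b)
  rw [← hc] at h
  simpa [Finsupp.sum, fun i ↦ hcounit (hc0 i)] using h.symm

/-- `S(a) Λ₁ ⊗ Λ₂ = Λ₁ ⊗ a Λ₂` for a left integral `Λ`. -/
theorem IsLeftIntegral.antipode_tmul_mul_comul {L : H} (hL : IsLeftIntegral k L) (a : H) :
    (S a ⊗ₜ[k] (1 : H)) * comul L = (1 ⊗ₜ a) * comul L := by
  rw [← sum_antipode_tmul_mul_comul (ℛ k a), Finset.sum_mul]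
  simp only [mul_assoc, ← Bialgebra.comul_mul, hL _, map_smul, mul_smul_comm, ← smul_mul_assoc]
  rw [← Finset.sum_mul]
  congr 1
  have h : a = ∑ i ∈ (ℛ k a).index, counit (R := k) ((ℛ k a).right i) • (ℛ k a).left i := by
    rw [← rightHit_eq_sum, rightHit_counit, Module.End.one_apply]
  conv_lhs => rw [h]
  simp [TensorProduct.sum_tmul, TensorProduct.smul_tmul']

/-- `Λ₁ a ⊗ Λ₂ = α(a₁) Λ₁ ⊗ Λ₂ S(a₂)`. -/
theorem comul_mul_tmul_one {L : H} {α : H →ₐ[k] k} (hα : ∀ a, L * a = α a • L) (a : H) :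
    comul L * (a ⊗ₜ[k] (1 : H)) = comul L * (1 ⊗ₜ S (leftHit α.toLinearMap a)) := by
  rw [← sum_comul_mul_tmul_antipode (ℛ k a), Finset.mul_sum]
  simp only [← mul_assoc, ← Bialgebra.comul_mul, hα, map_smul, smul_mul_assoc]
  rw [leftHit_eq_sum _ (ℛ k a)]
  simp [TensorProduct.tmul_sum, Finset.mul_sum]

/-- `S(Λ₁) ⊗ Λ₂ a = a₁ α(a₂) S(Λ₁) ⊗ Λ₂`. -/
theorem rTensor_antipode_comul_mul {L : H} {α : H →ₐ[k] k} (hα : ∀ a, L * a = α a • L) (a : H) :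
    (S).rTensor H (comul L * ((1 : H) ⊗ₜ[k] a)) =
      (rightHit α.toLinearMap a ⊗ₜ 1) * (S).rTensor H (comul L) := by
  have h (w : H ⊗[k] H) : ∑ i ∈ (ℛ k a).index, ((ℛ k a).left i ⊗ₜ[k] (1 : H)) *
      (S).rTensor H (w * comul ((ℛ k a).right i)) = (S).rTensor H (w * (1 ⊗ₜ a)) := by
    induction w with
    | zero => simp
    | add w w' hw hw' => simp only [map_add, add_mul, mul_add, Finset.sum_add_distrib, hw, hw']
    | tmul x y =>
      have hxy (v : H ⊗[k] H) : (S).rTensor H ((x ⊗ₜ y) * v) =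
          (1 ⊗ₜ y) * (S).rTensor H v * (S x ⊗ₜ 1) := by
        induction v with
        | zero => simp
        | add v v' hv hv' => simp only [map_add, add_mul, mul_add, hv, hv']
        | tmul p q => simp [HopfAlgebra.antipode_mul_antidistrib]
      have hcomm (z : H) (v : H ⊗[k] H) : (z ⊗ₜ[k] (1 : H)) * ((1 ⊗ₜ y) * v * (S x ⊗ₜ 1)) =
          (1 ⊗ₜ y) * ((z ⊗ₜ 1) * v) * (S x ⊗ₜ 1) := by
        simp [← mul_assoc]
      simp only [hxy, hcomm]
      rw [← Finset.sum_mul, ← Finset.mul_sum, sum_tmul_mul_rTensor_antipode_comul]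
      simp
  rw [← h]
  simp only [← Bialgebra.comul_mul, hα, map_smul, mul_smul_comm, ← smul_mul_assoc]
  rw [← Finset.sum_mul, rightHit_eq_sum _ (ℛ k a)]
  simp [TensorProduct.sum_tmul, TensorProduct.smul_tmul']

/-- Radford's formula: `S⁴` composed with `a ↦ α(a₁) a₂` equals `a ↦ g a₁ g⁻¹ α(a₂)`. -/
theorem antipode_pow_four_leftHit [FiniteDimensional k H] {g : H}
    (hg : IsDistinguishedGroupLike k g) {α : H →ₐ[k] k} (hα : IsDistinguishedGroupLikeDual k α)
    (c : H) : ((S : Module.End k H) ^ 4) (leftHit α.toLinearMap c) =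
      g * rightHit α.toLinearMap c * S g := by
  obtain ⟨hgl, l, hl0, hl, hlg⟩ := hg
  have hgl := hgl.isGroupLikeElem
  obtain ⟨L, hL0, hL, hLα⟩ := hα
  have hlL : l L ≠ 0 := fun h ↦ hL0 <| eq_zero_of_forall_integral_mul_eq_zero hl0 hlg fun a ↦ by
    rw [hL, map_smul, h, smul_zero]
  have hrecover (a : H) :
      TensorProduct.lid k H (l.rTensor H ((S a ⊗ₜ 1) * comul L)) = l L • a := by
    rw [hL.antipode_tmul_mul_comul, lid_rTensor_one_tmul_mul, ← leftHit_apply, hl.leftHit_apply]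
    simp
  have hinj : Function.Injective S := by
    rw [← LinearMap.ker_eq_bot, LinearMap.ker_eq_bot']
    intro a ha
    have h := hrecover a
    rw [ha] at h
    simpa [hlL] using h.symm
  -- The Nakayama automorphism relative to `l`.
  have hnakayama (x : H) : ∃ c, ∀ b, l (x * b) = l (b * c) := by
    let φ : H →ₗ[k] Module.Dual k H := ((LinearMap.mul k H).compr₂ l).flip
    have hφ : Function.Injective φ := by
      rw [← LinearMap.ker_eq_bot, LinearMap.ker_eq_bot']
      exact fun b hb ↦ eq_zero_of_forall_integral_mul_eq_zero hl0 hlg (LinearMap.congr_fun hb)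
    have hφs : Function.Surjective φ :=
      (LinearMap.injective_iff_surjective_of_finrank_eq_finrank
        Subspace.dual_finrank_eq.symm).mp hφ
    obtain ⟨c, hc⟩ := hφs (l ∘ₗ mulLeft k x)
    exact ⟨c, fun b ↦ (LinearMap.congr_fun hc b).symm⟩
  set y := leftHit α.toLinearMap c with hy
  obtain ⟨d, hd⟩ := hnakayama (S (S y))
  have hleft (w : H ⊗[k] H) : l.rTensor H ((S (S y) ⊗ₜ 1) * w) = l.rTensor H (w * (d ⊗ₜ 1)) := by
    induction w with
    | zero => simp
    | add w w' hw hw' => simp only [map_add, add_mul, mul_add, hw, hw']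
    | tmul p q => simp [hd]
  have hright (w : H ⊗[k] H) : l.lTensor H ((1 ⊗ₜ S (S y)) * w) = l.lTensor H (w * (1 ⊗ₜ d)) := by
    induction w with
    | zero => simp
    | add w w' hw hw' => simp only [map_add, add_mul, mul_add, hw, hw']
    | tmul p q => simp [hd]
  have hdc : leftHit α.toLinearMap d = leftHit α.toLinearMap c := by
    have h := hrecover (S y)
    rw [hleft, comul_mul_tmul_one hLα, lid_rTensor_mul_one_tmul, ← leftHit_apply,
      hl.leftHit_apply, smul_mul_assoc, one_mul] at h
    exact hinj (smul_right_injective H hlL h)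
  have hdc' : d = c := by
    have h := leftHit_comp_antipode_mul_leftHit α
    calc d = (leftHit (α.toLinearMap ∘ₗ S) * leftHit α.toLinearMap) d := by rw [h]; rfl
      _ = (leftHit (α.toLinearMap ∘ₗ S) * leftHit α.toLinearMap) c := by
        rw [Module.End.mul_apply, hdc, Module.End.mul_apply]
      _ = c := by rw [h]; rfl
  have hcontract (w : H ⊗[k] H) : S (TensorProduct.rid k H (l.lTensor H w)) =
      TensorProduct.rid k H (l.lTensor H ((S).rTensor H w)) := by
    induction w with
    | zero => simp
    | add w w' hw hw' => simp only [map_add, hw, hw']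
    | tmul p q => simp
  have hgrp : TensorProduct.rid k H (l.lTensor H (comul L)) = l L • g :=
    rightHit_apply_of_conv_eq hlg L
  have h := congrArg (fun w ↦ S (TensorProduct.rid k H w)) (hright (comul L))
  simp only [hcontract (comul L * _)] at h
  rw [rTensor_antipode_comul_mul hLα, rid_lTensor_tmul_one_mul, ← hcontract, hgrp,
    ← hL.antipode_tmul_mul_comul, rid_lTensor_tmul_one_mul, hgrp, mul_smul_comm, map_smul,
    map_smul, mul_smul_comm, HopfAlgebra.antipode_mul_antidistrib, hdc'] at h
  have h' := smul_right_injective H hlL h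
  have hpow : ((S : Module.End k H) ^ 4) y = S (S (S (S y))) := rfl
  rw [hpow, mul_assoc, ← h', ← mul_assoc, hgl.mul_antipode_cancel, one_mul]

theorem odd_orderOf_antipode_pow_four [FiniteDimensional k H] [CharZero k]
    (hdim : Odd (Module.finrank k H)) {g : H} (hg : IsDistinguishedGroupLike k g)
    {α : H →ₐ[k] k} (hα : IsDistinguishedGroupLikeDual k α) :
    Odd (orderOf ((S : Module.End k H) ^ 4)) := by
  have hgl := hg.1.isGroupLikeElem
  set T := leftHit α.toLinearMap
  set T' := rightHit α.toLinearMap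
  set C : Module.End k H := mulLeft k g * mulRight k (S g) with hC
  set p := orderOf g
  set q := orderOf T
  have hp : Odd p := hgl.odd_orderOf hdim
  have hq : Odd q := odd_orderOf_leftHit hdim α
  have hT : T ^ q = 1 := pow_orderOf_eq_one T
  have hT' : T' ^ q = 1 := by
    rw [rightHit_pow, (leftHit_pow_eq_one_iff _ _).mp hT, rightHit_counit]
  have hSg : (S g) ^ p = 1 := by
    have hcomm : Commute g (S g) :=
      hgl.mul_antipode_cancel.trans hgl.antipode_mul_cancel.symm
    have h := hcomm.mul_pow p
    rwa [hgl.mul_antipode_cancel, one_pow, pow_orderOf_eq_one, one_mul, eq_comm] at h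
  have hCp : C ^ p = 1 := by
    rw [hC, (commute_mulLeft_right (R := k) g (S g)).mul_pow, pow_mulLeft, pow_mulRight,
      pow_orderOf_eq_one, hSg, mulLeft_one, mulRight_one]
    rfl
  have hαg : α (S g) * α g = 1 := by rw [← map_mul, hgl.antipode_mul_cancel, map_one]
  have hCT : Commute C T := by
    refine LinearMap.ext fun a ↦ ?_
    have hTg : T g = α g • g := by simp [T, leftHit_apply, hgl]
    have hTSg : T (S g) = α (S g) • S g := by simp [T, leftHit_apply, hgl.antipode]
    change g * (T a * S g) = T (g * (a * S g))
    rw [leftHit_mul, leftHit_mul, hTg, hTSg, mul_smul_comm, mul_smul_comm, smul_mul_assoc,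
      smul_smul, hαg, one_smul]
  have hCT' : Commute C T' := by
    refine LinearMap.ext fun a ↦ ?_
    have hTg : T' g = α g • g := by simp [T', rightHit_apply, hgl]
    have hTSg : T' (S g) = α (S g) • S g := by simp [T', rightHit_apply, hgl.antipode]
    change g * (T' a * S g) = T' (g * (a * S g))
    rw [rightHit_mul, rightHit_mul, hTg, hTSg, mul_smul_comm, mul_smul_comm, smul_mul_assoc,
      smul_smul, hαg, one_smul]
  have hradford : (S : Module.End k H) ^ 4 * T = C * T' := by
    refine LinearMap.ext fun c ↦ ?_
    change ((S : Module.End k H) ^ 4) (T c) = g * (T' c * S g)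
    rw [antipode_pow_four_leftHit hg hα, mul_assoc]
  have hS : (S : Module.End k H) ^ 4 = C * T' * T ^ (q - 1) := by
    rw [← hradford, mul_assoc, ← pow_succ', Nat.sub_add_cancel hq.pos, hT, mul_one]
  have hcomm : Commute (C * T') (T ^ (q - 1)) :=
    (hCT.mul_left (commute_leftHit_rightHit _ _).symm).pow_right _
  refine (hp.mul hq).of_dvd_nat (orderOf_dvd_of_pow_eq_one ?_)
  rw [hS, hcomm.mul_pow, hCT'.mul_pow, pow_mul, hCp, one_pow, mul_comm p q, pow_mul, hT', one_pow,
    ← pow_mul, mul_comm (q - 1), pow_mul, pow_mul T, hT, one_pow, one_pow]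
  simp

end Radford

/-- Remark 3.2(ii). Let `H` be a Hopf algebra of odd dimension over an
algebraically closed field of characteristic `0`, with distinguished group-like elements `g`
of `H` and `α` of `H*`. Then the order of `g`, the order of `α` (in the convolution group,
whose unit is the counit), and the order of `S⁴` are all odd; consequently the index of `H`
(the least positive `m` with `S^{4m} = id` and `g^m = 1`) is odd. -/
theorem stmt15 (k : Type*) [Field k] [IsAlgClosed k] [CharZero k]
    (H : Type*) [Ring H] [HopfAlgebra k H] [FiniteDimensional k H]
    (hdim : Odd (Module.finrank k H))
    (g : H) (hg : IsDistinguishedGroupLike k g)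
    (α : H →ₐ[k] k) (hα : IsDistinguishedGroupLikeDual k α) :
    Odd (orderOf g) ∧
      Odd (sInf {m : ℕ | 0 < m ∧
        convPow (α.toLinearMap : Module.Dual k H) m = (Coalgebra.counit : H →ₗ[k] k)}) ∧
      Odd (orderOf ((HopfAlgebra.antipode (R := k) (A := H) : Module.End k H) ^ 4)) ∧
      Odd (sInf {m : ℕ | 0 < m ∧
        (HopfAlgebra.antipode (R := k) (A := H) : Module.End k H) ^ (4 * m) = 1 ∧
        g ^ m = 1}) := by
  have hgl := hg.1.isGroupLikeElem
  have hgodd : Odd (orderOf g) := hgl.odd_orderOf hdim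
  have hαodd := odd_orderOf_leftHit hdim α
  have hSodd := odd_orderOf_antipode_pow_four hdim hg hα
  refine ⟨hgodd, ?_, hSodd, ?_⟩
  · simp_rw [← leftHit_pow_eq_one_iff, ← orderOf_dvd_iff_pow_eq_one]
    rwa [Nat.sInf_pos_multiples hαodd.pos]
  · simp_rw [pow_mul, ← orderOf_dvd_iff_pow_eq_one, ← Nat.lcm_dvd_iff]
    rw [Nat.sInf_pos_multiples (Nat.lcm_pos hSodd.pos hgodd.pos)]
    exact (hSodd.mul hgodd).of_dvd_nat (Nat.lcm_dvd_mul _ _)
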